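/- arXiv:1410.2229 — 4 statements merged into one kernel-verified Lean document; each statement's English description precedes it below -/
import Mathlib

section
/- Let L ≥ 1 be a natural number, t > 0 a real number, and W : {1,…,L} → ℝ with W_i ≥ 0 for all i. Let u : {0,1,…,L+1} → ℝ satisfy u_0 = 0, u_{L+1} = 0, and the discrete inequality -t(u_{i+1} + u_{i-1} - 2u_i) + W_i u_i ≥ 0 for every i = 1,…,L. Then u_i ≥ 0 for all i = 0,…,L+1. -/
/-!
Suppose `u` takes a negative value and consider the leftmost site `m` at which `u` is minimal. The
boundary data are nonnegative, so `m` is an interior site. There `u m < u (m - 1)` and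
`u m ≤ u (m + 1)`, so the Laplacian is strictly positive, while `W m * u m ≤ 0`. Hence
`((-tΔ + W)u) m < 0`, contradicting the assumed inequality.
-/

theorem exists_leftmost_min_image {ι α : Type*} [LinearOrder ι] [LinearOrder α]
    (s : Finset ι) (f : ι → α) (hs : s.Nonempty) :
    ∃ m ∈ s, (∀ j ∈ s, f m ≤ f j) ∧ ∀ j ∈ s, j < m → f m < f j := by
  obtain ⟨m, hm, hmin⟩ := s.exists_min_image (fun i ↦ toLex (f i, i)) hs
  simp only [Prod.Lex.toLex_le_toLex] at hmin
  refine ⟨m, hm, fun j hj ↦ ?_, fun j hj hjm ↦ ?_⟩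
  · exact (hmin j hj).elim le_of_lt fun h ↦ h.1.le
  · exact (hmin j hj).resolve_right fun h ↦ hjm.not_ge h.2

/-- The discrete Schrödinger operator `-tΔ + W` on functions on `ℕ`, with constant hopping
parameter `t` and potential `W`. At the site `0` the left neighbour `i - 1` is `0` itself, so
only the values at sites `i ≥ 1` are meaningful. -/
def discreteSchrodinger {R : Type*} [Ring R] (t : R) (W u : ℕ → R) (i : ℕ) : R :=
  -t * (u (i + 1) + u (i - 1) - 2 * u i) + W i * u i

theorem discreteSchrodinger_neg {R : Type*} [Ring R] [PartialOrder R] [IsStrictOrderedRing R]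
    {t : R} {W u : ℕ → R} {i : ℕ} (ht : 0 < t) (hW : 0 ≤ W i) (hu : u i ≤ 0)
    (hleft : u i < u (i - 1)) (hright : u i ≤ u (i + 1)) :
    discreteSchrodinger t W u i < 0 := by
  have laplacian_pos : 0 < u (i + 1) + u (i - 1) - 2 * u i := by
    rw [sub_pos, two_mul]
    exact add_lt_add_of_le_of_lt hright hleft
  exact add_neg_of_neg_of_nonpos (mul_neg_of_neg_of_pos (neg_neg_of_pos ht) laplacian_pos)
    (mul_nonpos_of_nonneg_of_nonpos hW hu)

theorem discrete_maximum_principle_nonneg_general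
    {R : Type*} [Ring R] [LinearOrder R] [IsStrictOrderedRing R]
    {L : ℕ} {t : R} {W u : ℕ → R} (ht : 0 < t) (hW : ∀ i ∈ Finset.Icc 1 L, 0 ≤ W i)
    (hu0 : 0 ≤ u 0) (huL : 0 ≤ u (L + 1))
    (hineq : ∀ i ∈ Finset.Icc 1 L, 0 ≤ discreteSchrodinger t W u i) :
    ∀ i ∈ Finset.Icc 0 (L + 1), 0 ≤ u i := by
  obtain ⟨m, hm, hmin, hleftmost⟩ :=
    exists_leftmost_min_image (Finset.Icc 0 (L + 1)) u ⟨0, by simp⟩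
  suffices hum : 0 ≤ u m from fun i hi ↦ hum.trans (hmin i hi)
  by_contra! hneg
  have hm_ne_zero : m ≠ 0 := by rintro rfl; exact hneg.not_ge hu0
  have hm_ne_last : m ≠ L + 1 := by rintro rfl; exact hneg.not_ge huL
  simp only [Finset.mem_Icc] at hm hmin hleftmost
  have hm_interior : m ∈ Finset.Icc 1 L := Finset.mem_Icc.mpr (by lia)
  have hleft : u m < u (m - 1) := hleftmost _ (by lia) (by lia)
  have hright : u m ≤ u (m + 1) := hmin _ (by lia)
  exact (hineq m hm_interior).not_gt
    (discreteSchrodinger_neg ht (hW m hm_interior) hneg.le hleft hright)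

/-- Maximum principle for the discrete Schrödinger operator `-tΔ_D + W` with
Dirichlet boundary conditions: if `(-tΔ_D + W)u ≥ 0` at every interior site,
then `u ≥ 0` everywhere. -/
theorem discrete_maximum_principle_nonneg
    (L : ℕ) (hL : 1 ≤ L) (t : ℝ) (ht : 0 < t) (W u : ℕ → ℝ)
    (hW : ∀ i ∈ Finset.Icc 1 L, 0 ≤ W i)
    (hu0 : u 0 = 0) (huL : u (L + 1) = 0)
    (hineq : ∀ i ∈ Finset.Icc 1 L,
      0 ≤ -t * (u (i + 1) + u (i - 1) - 2 * u i) + W i * u i) :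
    ∀ i ∈ Finset.Icc 0 (L + 1), 0 ≤ u i :=
  discrete_maximum_principle_nonneg_general ht hW hu0.ge huL.ge hineq
end

section
/- Let L ≥ 1 be a natural number, t > 0 a real number, and W : {1,…,L} → ℝ with W_i ≥ 0 for all i. Let u : {0,1,…,L+1} → ℝ satisfy u_0 = 0, u_{L+1} = 0, and -t(u_{i+1} + u_{i-1} - 2u_i) + W_i u_i ≥ 0 for every i = 1,…,L. If moreover there exists an index i_0 ∈ {1,…,L} with -t(u_{i_0+1} + u_{i_0-1} - 2u_{i_0}) + W_{i_0} u_{i_0} > 0, then u_i > 0 for all i = 1,…,L. -/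
/-!
At a nonpositive local minimum every summand of `∑ y, c x y * (u x - u y) + W x * u x` is
nonpositive. If the total is also nonnegative, all summands vanish, so the minimum value is shared
by all the neighbours and spreads through a connected interior. If `u` were nonpositive somewhere
inside, nonnegative boundary values would force such a minimum to be attained in the interior, so
every interior site would be a nonpositive local minimum, contradicting strict positivity at one.
-/

open Finset SimpleGraph

section Graph

variable {V K : Type*} {G : SimpleGraph V} [G.LocallyFinite] [Ring K]

variable (G) in
/-- The Schrödinger operator on a locally finite graph with conductances `c` and potential `W`,
with the sign convention making the Laplacian part positive. The conductances need not be
symmetric, and `c x y` is only read along edges. -/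
def graphSchrodinger (c : V → V → K) (W u : V → K) (x : V) : K :=
  ∑ y ∈ G.neighborFinset x, c x y * (u x - u y) + W x * u x

variable [LinearOrder K] [IsStrictOrderedRing K] {c : V → V → K} {W u : V → K} {x : V}

namespace graphSchrodinger

theorem summand_nonpos_of_forall_adj_le (hc : ∀ y, G.Adj x y → 0 ≤ c x y)
    (hmin : ∀ y, G.Adj x y → u x ≤ u y) :
    ∀ y ∈ G.neighborFinset x, c x y * (u x - u y) ≤ 0 := by
  intro y hy
  rw [mem_neighborFinset] at hy
  exact mul_nonpos_of_nonneg_of_nonpos (hc y hy) (sub_nonpos.2 (hmin y hy))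

theorem nonpos_of_forall_adj_le (hc : ∀ y, G.Adj x y → 0 ≤ c x y) (hW : 0 ≤ W x)
    (hux : u x ≤ 0) (hmin : ∀ y, G.Adj x y → u x ≤ u y) :
    graphSchrodinger G c W u x ≤ 0 :=
  add_nonpos (sum_nonpos (summand_nonpos_of_forall_adj_le hc hmin))
    (mul_nonpos_of_nonneg_of_nonpos hW hux)

theorem eq_of_adj_of_forall_adj_le (hc : ∀ y, G.Adj x y → 0 < c x y) (hW : 0 ≤ W x)
    (hux : u x ≤ 0) (hmin : ∀ y, G.Adj x y → u x ≤ u y)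
    (hsuper : 0 ≤ graphSchrodinger G c W u x) {y : V} (hxy : G.Adj x y) :
    u y = u x := by
  have hterm := summand_nonpos_of_forall_adj_le (fun z hz => (hc z hz).le) hmin
  have hpot : W x * u x ≤ 0 := mul_nonpos_of_nonneg_of_nonpos hW hux
  have hsum : ∑ z ∈ G.neighborFinset x, c x z * (u x - u z) = 0 :=
    (sum_nonpos hterm).antisymm (hsuper.trans (add_le_of_nonpos_right hpot))
  have hzero : c x y * (u x - u y) = 0 :=
    (sum_eq_zero_iff_of_nonpos hterm).1 hsum y ((mem_neighborFinset G x y).2 hxy)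
  exact (sub_eq_zero.1 ((mul_eq_zero.1 hzero).resolve_left (hc y hxy).ne')).symm

theorem eq_of_preconnected_of_forall_adj_le {S : Set V} (hS : (G.induce S).Preconnected)
    (hc : ∀ x ∈ S, ∀ y, G.Adj x y → 0 < c x y) (hW : ∀ x ∈ S, 0 ≤ W x)
    (hsuper : ∀ x ∈ S, 0 ≤ graphSchrodinger G c W u x) {m : V} (hm : m ∈ S) (hum : u m ≤ 0)
    (hmin : ∀ x ∈ S, ∀ y, G.Adj x y → u m ≤ u y) (hx : x ∈ S) :
    u x = u m := by
  suffices hreach : ∀ z : S, Relation.ReflTransGen (G.induce S).Adj ⟨m, hm⟩ z → u z = u m from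
    hreach ⟨x, hx⟩ ((reachable_iff_reflTransGen _ _).1 (hS ⟨m, hm⟩ ⟨x, hx⟩))
  intro z hz
  induction hz with
  | refl => rfl
  | @tail y z _ hyz ih =>
    rw [← ih] at hum hmin ⊢
    exact eq_of_adj_of_forall_adj_le (hc y y.2) (hW y y.2) hum (hmin y y.2) (hsuper y y.2) hyz

end graphSchrodinger

theorem discrete_maximum_principle_pos_general {S : Finset V}
    (hS : (G.induce (S : Set V)).Preconnected)
    (hc : ∀ x ∈ S, ∀ y, G.Adj x y → 0 < c x y) (hW : ∀ x ∈ S, 0 ≤ W x)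
    (hbdry : ∀ x ∈ S, ∀ y ∉ S, G.Adj x y → 0 ≤ u y)
    (hsuper : ∀ x ∈ S, 0 ≤ graphSchrodinger G c W u x)
    (hstrict : ∃ x ∈ S, 0 < graphSchrodinger G c W u x) :
    ∀ x ∈ S, 0 < u x := by
  intro x hx
  by_contra! hux
  obtain ⟨m, hm, hmS⟩ := S.exists_min_image u ⟨x, hx⟩
  have hum : u m ≤ 0 := (hmS x hx).trans hux
  have hmin : ∀ y ∈ S, ∀ z, G.Adj y z → u m ≤ u z := by
    intro y hy z hyz
    by_cases hz : z ∈ S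
    · exact hmS z hz
    · exact hum.trans (hbdry y hy z hz hyz)
  obtain ⟨y, hy, hpos⟩ := hstrict
  have hym : u y = u m :=
    graphSchrodinger.eq_of_preconnected_of_forall_adj_le hS hc hW hsuper hm hum hmin hy
  rw [← hym] at hum hmin
  exact hpos.not_ge <| graphSchrodinger.nonpos_of_forall_adj_le
    (fun z hz => (hc y hy z hz).le) (hW y hy) hum (hmin y hy)

end Graph

theorem preconnected_induce_hasse {α : Type*} [LinearOrder α] [SuccOrder α] [IsSuccArchimedean α]
    (s : Set α) [s.OrdConnected] : ((hasse α).induce s).Preconnected := by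
  refine (hasse_preconnected_of_succ s).mono fun a b hab => ?_
  have hcov {a b : s} (h : a ⋖ b) : (a : α) ⋖ b :=
    h.image (OrderEmbedding.subtype _) (by simpa)
  exact hab.imp hcov hcov

theorem hasse_nat_neighborSet_subset (n : ℕ) :
    (hasse ℕ).neighborSet n ⊆ Set.Icc (n - 1) (n + 1) := by
  intro m
  simp only [mem_neighborSet, hasse_adj, Nat.covBy_iff_add_one_eq, Set.mem_Icc]
  omega

noncomputable instance hasseNatLocallyFinite : (hasse ℕ).LocallyFinite :=
  fun n => ((Set.finite_Icc _ _).subset (hasse_nat_neighborSet_subset n)).fintype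

theorem hasse_nat_neighborFinset {n : ℕ} (hn : 1 ≤ n) :
    (hasse ℕ).neighborFinset n = {n - 1, n + 1} := by
  ext m
  simp only [mem_neighborFinset, hasse_adj, Nat.covBy_iff_add_one_eq, mem_insert, mem_singleton]
  omega

theorem graphSchrodinger_hasse_nat_const {K : Type*} [CommRing K] (t : K) (W u : ℕ → K) {n : ℕ}
    (hn : 1 ≤ n) :
    graphSchrodinger (hasse ℕ) (fun _ _ => t) W u n =
      -t * (u (n + 1) + u (n - 1) - 2 * u n) + W n * u n := by
  rw [graphSchrodinger, hasse_nat_neighborFinset hn, sum_pair (by omega)]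
  ring

theorem pos_of_graphSchrodinger_hasse_nat_nonneg {K : Type*} [Ring K] [LinearOrder K]
    [IsStrictOrderedRing K] {c : ℕ → ℕ → K} {W u : ℕ → K} {a b : ℕ}
    (hc : ∀ i ∈ Icc (a + 1) b, ∀ j, (hasse ℕ).Adj i j → 0 < c i j)
    (hW : ∀ i ∈ Icc (a + 1) b, 0 ≤ W i) (hua : 0 ≤ u a) (hub : 0 ≤ u (b + 1))
    (hsuper : ∀ i ∈ Icc (a + 1) b, 0 ≤ graphSchrodinger (hasse ℕ) c W u i)
    (hstrict : ∃ i ∈ Icc (a + 1) b, 0 < graphSchrodinger (hasse ℕ) c W u i) :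
    ∀ i ∈ Icc (a + 1) b, 0 < u i := by
  have hconn : ((hasse ℕ).induce (Icc (a + 1) b : Set ℕ)).Preconnected := by
    rw [coe_Icc]
    exact preconnected_induce_hasse _
  refine discrete_maximum_principle_pos_general hconn hc hW ?_ hsuper hstrict
  intro i hi j hj hij
  simp only [mem_Icc, hasse_adj, Nat.covBy_iff_add_one_eq] at hi hj hij
  obtain rfl | rfl : j = a ∨ j = b + 1 := by omega
  exacts [hua, hub]

/-- Strong maximum principle for the discrete Schrödinger operator `-tΔ_D + W`
with Dirichlet boundary conditions: if `(-tΔ_D + W)u ≥ 0` at every interior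
site and `(-tΔ_D + W)u > 0` at some interior site, then `u > 0` at every
interior site. -/
theorem discrete_maximum_principle_pos
    (L : ℕ) (hL : 1 ≤ L) (t : ℝ) (ht : 0 < t) (W u : ℕ → ℝ)
    (hW : ∀ i ∈ Finset.Icc 1 L, 0 ≤ W i)
    (hu0 : u 0 = 0) (huL : u (L + 1) = 0)
    (hineq : ∀ i ∈ Finset.Icc 1 L,
      0 ≤ -t * (u (i + 1) + u (i - 1) - 2 * u i) + W i * u i)
    (hstrict : ∃ i₀ ∈ Finset.Icc 1 L,
      0 < -t * (u (i₀ + 1) + u (i₀ - 1) - 2 * u i₀) + W i₀ * u i₀) :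
    ∀ i ∈ Finset.Icc 1 L, 0 < u i := by
  have hop : ∀ i ∈ Finset.Icc 1 L, graphSchrodinger (hasse ℕ) (fun _ _ => t) W u i =
      -t * (u (i + 1) + u (i - 1) - 2 * u i) + W i * u i :=
    fun i hi => graphSchrodinger_hasse_nat_const t W u (Finset.mem_Icc.1 hi).1
  obtain ⟨i₀, hi₀, hpos⟩ := hstrict
  exact pos_of_graphSchrodinger_hasse_nat_nonneg (fun _ _ _ _ => ht) hW hu0.ge huL.ge
    (fun i hi => (hineq i hi).trans_eq (hop i hi).symm)
    ⟨i₀, hi₀, hpos.trans_eq (hop i₀ hi₀).symm⟩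
end

section
/- Let L ≥ 1 be a natural number, t > 0 a real number, and W : {1,…,L} → ℝ with W_i ≥ 0 for all i. Let A be the L×L tridiagonal matrix with A_{ii} = 2t + W_i, A_{i,i-1} = A_{i-1,i} = -t, and all other entries zero. Then every entry of the inverse matrix A⁻¹ is strictly positive: (A⁻¹)_{jk} > 0 for all j,k ∈ {1,…,L}. -/
/-!
Write the matrix as `t` times the Laplacian of the path graph plus a diagonal matrix that collects
the potential and, at the two ends, the Dirichlet boundary condition. A vector `v` with `0 ≤ A v`
satisfies a strong minimum principle: at a nonpositive minimum the inequality `0 ≤ (A v) i` forces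
`v` to take the same value at all neighbours of `i`, hence everywhere, and at an end of the path it
forces that value to be `0`. So `v` is zero or positive everywhere. Applied to `± v` with `A v = 0`
this gives invertibility; applied to the columns of `A⁻¹` it gives their positivity.
-/

open Matrix SimpleGraph

section MinimumPrinciple

variable {n R : Type*} [Fintype n]

/-- An irreducibly diagonally dominant Z-matrix, the class of matrices for which the strong minimum
principle is proved here. As the entries off the diagonal are nonpositive, diagonal dominance says
that the row sums are nonnegative; irreducibility says that any two indices are joined by a chain of
negative entries. -/
structure IsIrreduciblyDominantZMatrix [AddCommMonoid R] [Preorder R] (A : Matrix n n R) :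
    Prop where
  offDiag_nonpos : ∀ i j, j ≠ i → A i j ≤ 0
  rowSum_nonneg : ∀ i, 0 ≤ ∑ j, A i j
  exists_rowSum_pos : ∃ i, 0 < ∑ j, A i j
  reflTransGen_neg : ∀ i j, Relation.ReflTransGen (fun k l => A k l < 0) i j

section Row

variable [Ring R]

lemma sum_mul_sub_eq_dotProduct_sub (a v : n → R) (i : n) :
    ∑ j, a j * (v j - v i) = a ⬝ᵥ v - (∑ j, a j) * v i := by
  simp only [mul_sub, Finset.sum_sub_distrib, Finset.sum_mul, dotProduct]

variable [PartialOrder R] [IsOrderedRing R] {a v : n → R} {i : n}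

omit [Fintype n] in
lemma mul_sub_nonpos_of_forall_le (hoff : ∀ j, j ≠ i → a j ≤ 0) (hmin : ∀ j, v i ≤ v j) (j : n) :
    a j * (v j - v i) ≤ 0 := by
  obtain rfl | hj := eq_or_ne j i
  · simp
  · exact mul_nonpos_of_nonpos_of_nonneg (hoff j hj) (sub_nonneg.2 (hmin j))

lemma dotProduct_le_sum_mul_of_forall_le (hoff : ∀ j, j ≠ i → a j ≤ 0) (hmin : ∀ j, v i ≤ v j) :
    a ⬝ᵥ v ≤ (∑ j, a j) * v i := by
  rw [← sub_nonpos, ← sum_mul_sub_eq_dotProduct_sub]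
  exact Finset.sum_nonpos fun j _ => mul_sub_nonpos_of_forall_le hoff hmin j

lemma sum_mul_eq_zero_of_dotProduct_nonneg (hoff : ∀ j, j ≠ i → a j ≤ 0) (hsum : 0 ≤ ∑ j, a j)
    (hav : 0 ≤ a ⬝ᵥ v) (hmin : ∀ j, v i ≤ v j) (hvi : v i ≤ 0) : (∑ j, a j) * v i = 0 :=
  (mul_nonpos_of_nonneg_of_nonpos hsum hvi).antisymm
    (hav.trans (dotProduct_le_sum_mul_of_forall_le hoff hmin))

lemma mul_sub_eq_zero_of_dotProduct_nonneg (hoff : ∀ j, j ≠ i → a j ≤ 0) (hsum : 0 ≤ ∑ j, a j)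
    (hav : 0 ≤ a ⬝ᵥ v) (hmin : ∀ j, v i ≤ v j) (hvi : v i ≤ 0) (j : n) :
    a j * (v j - v i) = 0 := by
  have hterm : ∀ k ∈ Finset.univ, a k * (v k - v i) ≤ 0 :=
    fun k _ => mul_sub_nonpos_of_forall_le hoff hmin k
  have htotal : ∑ k, a k * (v k - v i) = 0 := by
    refine (Finset.sum_nonpos hterm).antisymm ?_
    rwa [sum_mul_sub_eq_dotProduct_sub,
      sum_mul_eq_zero_of_dotProduct_nonneg hoff hsum hav hmin hvi, sub_zero]
  exact (Finset.sum_eq_zero_iff_of_nonpos hterm).1 htotal j (Finset.mem_univ j)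

end Row

namespace IsIrreduciblyDominantZMatrix

section Ring

variable [Ring R] [LinearOrder R] [IsStrictOrderedRing R] {A : Matrix n n R} {v : n → R}

lemma eq_of_forall_le (hA : IsIrreduciblyDominantZMatrix A) (hv : 0 ≤ A *ᵥ v) {i : n}
    (hmin : ∀ j, v i ≤ v j) (hvi : v i ≤ 0) (j : n) : v j = v i := by
  induction hA.reflTransGen_neg i j with
  | refl => rfl
  | @tail k l _ hkl hk =>
    rw [← hk] at hmin hvi ⊢
    have hzero := mul_sub_eq_zero_of_dotProduct_nonneg (hA.offDiag_nonpos k) (hA.rowSum_nonneg k)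
      (hv k) hmin hvi l
    exact sub_eq_zero.1 ((mul_eq_zero.1 hzero).resolve_left hkl.ne)

theorem eq_zero_or_pos (hA : IsIrreduciblyDominantZMatrix A) (hv : 0 ≤ A *ᵥ v) :
    v = 0 ∨ ∀ i, 0 < v i := by
  refine or_iff_not_imp_right.2 fun hpos => ?_
  obtain ⟨q, hq⟩ := not_forall.1 hpos
  have : Nonempty n := ⟨q⟩
  obtain ⟨i, hmin⟩ := Finite.exists_min v
  have hvi : v i ≤ 0 := (hmin q).trans (not_lt.1 hq)
  have hconst := hA.eq_of_forall_le hv hmin hvi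
  obtain ⟨k, hk⟩ := hA.exists_rowSum_pos
  rw [← hconst k] at hmin hvi
  have hvk : v k = 0 := (mul_eq_zero.1 (sum_mul_eq_zero_of_dotProduct_nonneg
    (hA.offDiag_nonpos k) hk.le (hv k) hmin hvi)).resolve_left hk.ne'
  exact funext fun j => by rw [hconst j, ← hconst k, hvk, Pi.zero_apply]

end Ring

variable [DecidableEq n]

theorem det_ne_zero [CommRing R] [LinearOrder R] [IsStrictOrderedRing R] {A : Matrix n n R}
    (hA : IsIrreduciblyDominantZMatrix A) : A.det ≠ 0 := by
  intro hdet
  obtain ⟨v, hv, hAv⟩ := exists_mulVec_eq_zero_iff.2 hdet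
  have hpos := (hA.eq_zero_or_pos hAv.ge).resolve_left hv
  have hneg := (hA.eq_zero_or_pos (v := -v) (by rw [mulVec_neg, hAv, neg_zero])).resolve_left
    (neg_ne_zero.2 hv)
  obtain ⟨i, -⟩ := Function.ne_iff.1 hv
  exact (neg_pos.1 (hneg i)).not_gt (hpos i)

theorem inv_pos [Field R] [LinearOrder R] [IsStrictOrderedRing R] {A : Matrix n n R}
    (hA : IsIrreduciblyDominantZMatrix A) (j k : n) : 0 < A⁻¹ j k := by
  have hcol : A *ᵥ A⁻¹.col k = Pi.single k 1 := by
    rw [← mulVec_single_one, mulVec_mulVec, mul_nonsing_inv A hA.det_ne_zero.isUnit, one_mulVec]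
  have hne : A⁻¹.col k ≠ 0 := by
    intro h
    rw [h, mulVec_zero] at hcol
    simpa using congrFun hcol k
  have hnonneg : 0 ≤ A *ᵥ A⁻¹.col k := hcol ▸ Pi.single_nonneg.2 zero_le_one
  exact (hA.eq_zero_or_pos hnonneg).resolve_left hne j

end IsIrreduciblyDominantZMatrix

end MinimumPrinciple

section GraphLaplacian

variable {V R : Type*} [Fintype V] [DecidableEq V] {G : SimpleGraph V} [DecidableRel G.Adj]
  {t : R} {c : V → R}

lemma smul_lapMatrix_add_diagonal_apply_of_ne [Ring R] {i j : V} (hij : j ≠ i) :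
    (t • G.lapMatrix R + diagonal c) i j = if G.Adj i j then -t else 0 := by
  split_ifs with h <;> simp [lapMatrix, degMatrix, hij.symm, h]

lemma sum_smul_lapMatrix_add_diagonal [Ring R] (i : V) :
    ∑ j, (t • G.lapMatrix R + diagonal c) i j = c i := by
  have hlap : ∑ j, G.lapMatrix R i j = 0 := by
    simpa [mulVec, dotProduct] using congrFun (G.lapMatrix_mulVec_const_eq_zero (R := R)) i
  simp [Finset.sum_add_distrib, ← Finset.mul_sum, hlap, diagonal_apply]

theorem isIrreduciblyDominantZMatrix_smul_lapMatrix_add_diagonal [Ring R] [PartialOrder R]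
    [IsOrderedRing R] (hG : G.Preconnected) (ht : 0 < t) (hc : ∀ i, 0 ≤ c i)
    (hc' : ∃ i, 0 < c i) :
    IsIrreduciblyDominantZMatrix (t • G.lapMatrix R + diagonal c) where
  offDiag_nonpos i j hij := by
    rw [smul_lapMatrix_add_diagonal_apply_of_ne hij]
    split_ifs
    exacts [neg_nonpos.2 ht.le, le_rfl]
  rowSum_nonneg i := (hc i).trans_eq (sum_smul_lapMatrix_add_diagonal i).symm
  exists_rowSum_pos := by simpa only [sum_smul_lapMatrix_add_diagonal] using hc'
  reflTransGen_neg i j := by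
    refine Relation.ReflTransGen.mono (fun k l hkl => ?_) i j
      ((reachable_iff_reflTransGen i j).1 (hG i j))
    rw [smul_lapMatrix_add_diagonal_apply_of_ne hkl.ne', if_pos hkl]
    exact neg_neg_of_pos ht

end GraphLaplacian

section Path

variable {L : ℕ} [DecidableRel (pathGraph L).Adj]

lemma degree_pathGraph_le_two (i : Fin L) : (pathGraph L).degree i ≤ 2 := by
  have hmaps : Set.MapsTo Fin.val ((pathGraph L).neighborFinset i : Set (Fin L))
      ({(i : ℕ) + 1, (i : ℕ) - 1} : Finset ℕ) := by
    intro j hj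
    rw [Finset.mem_coe, mem_neighborFinset, pathGraph_adj] at hj
    rw [Finset.mem_coe, Finset.mem_insert, Finset.mem_singleton]
    omega
  exact (Finset.card_le_card_of_injOn _ hmaps Fin.val_injective.injOn).trans Finset.card_le_two

lemma degree_pathGraph_le_one_of_val_eq_zero {i : Fin L} (hi : (i : ℕ) = 0) :
    (pathGraph L).degree i ≤ 1 := by
  refine Finset.card_le_one.2 fun j hj k hk => ?_
  rw [mem_neighborFinset, pathGraph_adj] at hj hk
  omega

lemma smul_lapMatrix_pathGraph_add_diagonal_apply {R : Type*} [CommRing R] (t : R)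
    (W : Fin L → R) (i j : Fin L) :
    (t • (pathGraph L).lapMatrix R + diagonal fun k => W k + t * (2 - (pathGraph L).degree k)) i j =
      if (i : ℕ) = (j : ℕ) then 2 * t + W i
      else if (i : ℕ) + 1 = (j : ℕ) ∨ (j : ℕ) + 1 = (i : ℕ) then -t
      else 0 := by
  obtain rfl | hij := eq_or_ne j i
  · simp only [lapMatrix, degMatrix, Matrix.add_apply, Matrix.smul_apply, Matrix.sub_apply,
      diagonal_apply_eq, adjMatrix_apply, SimpleGraph.irrefl, ↓reduceIte, sub_zero, smul_eq_mul]
    ring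
  · simp only [smul_lapMatrix_add_diagonal_apply_of_ne hij, pathGraph_adj,
      if_neg (Fin.val_ne_of_ne hij.symm)]

end Path

theorem tridiagonal_schrodinger_matrix_inverse_pos_general {K : Type*} [Field K] [LinearOrder K]
    [IsStrictOrderedRing K] (L : ℕ) (t : K) (ht : 0 < t) (W : Fin L → K) (hW : ∀ i, 0 ≤ W i)
    (A : Matrix (Fin L) (Fin L) K)
    (hA : ∀ i j : Fin L, A i j =
      if (i : ℕ) = (j : ℕ) then 2 * t + W i
      else if (i : ℕ) + 1 = (j : ℕ) ∨ (j : ℕ) + 1 = (i : ℕ) then -t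
      else 0) (j k : Fin L) : 0 < A⁻¹ j k := by
  classical
  obtain rfl : A = t • (pathGraph L).lapMatrix K +
      diagonal fun i => W i + t * (2 - (pathGraph L).degree i) :=
    Matrix.ext fun i j => (hA i j).trans (smul_lapMatrix_pathGraph_add_diagonal_apply t W i j).symm
  refine (isIrreduciblyDominantZMatrix_smul_lapMatrix_add_diagonal (pathGraph_preconnected L) ht
    (fun i => ?_) ⟨⟨0, j.pos⟩, ?_⟩).inv_pos j k
  · have hdeg : ((pathGraph L).degree i : K) ≤ 2 := mod_cast degree_pathGraph_le_two i
    exact add_nonneg (hW i) (mul_nonneg ht.le (sub_nonneg.2 hdeg))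
  · have hdeg : ((pathGraph L).degree ⟨0, j.pos⟩ : K) < 2 :=
      mod_cast (degree_pathGraph_le_one_of_val_eq_zero (i := ⟨0, j.pos⟩) rfl).trans_lt one_lt_two
    exact add_pos_of_nonneg_of_pos (hW _) (mul_pos ht (sub_pos.2 hdeg))

/-- Positivity of the discrete Green function: every entry of the inverse of
the tridiagonal matrix of the discrete Dirichlet Schrödinger operator
`-tΔ_D + W` is strictly positive. -/
theorem tridiagonal_schrodinger_matrix_inverse_pos
    (L : ℕ) (hL : 1 ≤ L) (t : ℝ) (ht : 0 < t) (W : Fin L → ℝ)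
    (hW : ∀ i, 0 ≤ W i)
    (A : Matrix (Fin L) (Fin L) ℝ)
    (hA : ∀ i j : Fin L, A i j =
      if (i : ℕ) = (j : ℕ) then 2 * t + W i
      else if (i : ℕ) + 1 = (j : ℕ) ∨ (j : ℕ) + 1 = (i : ℕ) then -t
      else 0) :
    ∀ j k : Fin L, 0 < A⁻¹ j k :=
  tridiagonal_schrodinger_matrix_inverse_pos_general L t ht W hW A hA
end

section
/- Let L ≥ 1 be a natural number, t > 0 a real number, and W : {1,…,L} → ℝ with W_i ≥ 0 for all i. Let ψ : {0,1,…,L+1} → ℝ satisfy ψ_0 = ψ_{L+1} = 0 and -t(ψ_{j+1} + ψ_{j-1} - 2ψ_j) + W_j ψ_j = λ ψ_j for every j = 1,…,L, and let u : {0,1,…,L+1} → ℝ satisfy u_0 = u_{L+1} = 0 and -t(u_{j+1} + u_{j-1} - 2u_j) + W_j u_j = 1 for every j = 1,…,L. Then ψ_j ≤ λ · (max_{1≤k≤L} |ψ_k|) · u_j for all j = 1,…,L. -/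
/-!
Write `H` for the Schrödinger operator, `s` for the set of interior sites and `M` for the maximum
of `|ψ|` over `s`. At a nonpositive minimum of `v` the value of `H v` is nonpositive. Applied where
`|ψ|` is maximal, to whichever of `±ψ` is nonpositive there, this gives `0 ≤ λ M`, hence
`±H ψ = ±λ ψ ≤ λ M = H (λ M u)`. The conclusion is then the comparison principle for `H`, which
needs no connectedness: as `H u = 1`, the landscape function `u` is positive, and adding `ε u` to a
supersolution makes it strict.
-/

section Operator

variable {V K : Type*} [CommRing K]

/-- The Schrödinger operator with hopping amplitudes `c x y` and potential `W`. Finite support of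
`c x` makes the sum over the neighbours `y` of `x` meaningful on an infinite set of sites. -/
def schrodingerOperator (c : V → V →₀ K) (W : V → K) : (V → K) →ₗ[K] V → K where
  toFun v x := (c x).sum (fun y a ↦ a * (v x - v y)) + W x * v x
  map_add' v w := by
    ext x
    simp only [Finsupp.sum, Pi.add_apply, add_sub_add_comm, mul_add, Finset.sum_add_distrib]
    ring
  map_smul' r v := by
    ext x
    simp only [Finsupp.sum, Pi.smul_apply, smul_eq_mul, RingHom.id_apply, ← mul_sub, mul_add,
      Finset.mul_sum, mul_left_comm r]

theorem schrodingerOperator_apply (c : V → V →₀ K) (W v : V → K) (x : V) :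
    schrodingerOperator c W v x = (c x).sum (fun y a ↦ a * (v x - v y)) + W x * v x :=
  rfl

/-- The sites outside `s` reached from `s` by a single hop: those where the Dirichlet condition for
`schrodingerOperator c W` on `s` is imposed. -/
def outerBoundary (c : V → V →₀ K) (s : Finset V) : Set V :=
  {y | y ∉ s ∧ ∃ x ∈ s, c x y ≠ 0}

theorem mem_or_mem_outerBoundary {c : V → V →₀ K} {s : Finset V} {x y : V} (hx : x ∈ s)
    (hy : y ∈ (c x).support) : y ∈ s ∨ y ∈ outerBoundary c s :=
  or_iff_not_imp_left.mpr fun hys ↦ ⟨hys, x, hx, Finsupp.mem_support_iff.mp hy⟩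

end Operator

section OrderedRing

variable {V K : Type*} [CommRing K] [LinearOrder K] [IsStrictOrderedRing K]
  {c : V → V →₀ K} {W v ψ : V → K} {s : Finset V}

theorem schrodingerOperator_apply_nonpos {x : V} (hc : 0 ≤ c x) (hW : 0 ≤ W x) (hx : v x ≤ 0)
    (hmin : ∀ y ∈ (c x).support, v x ≤ v y) : schrodingerOperator c W v x ≤ 0 :=
  add_nonpos
    (Finset.sum_nonpos fun y hy ↦
      mul_nonpos_of_nonneg_of_nonpos (hc y) (sub_nonpos.mpr (hmin y hy)))
    (mul_nonpos_of_nonneg_of_nonpos hW hx)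

theorem pos_of_schrodingerOperator_pos (hc : ∀ x ∈ s, 0 ≤ c x) (hW : ∀ x ∈ s, 0 ≤ W x)
    (hv : ∀ x ∈ s, 0 < schrodingerOperator c W v x) (hbd : ∀ x ∈ outerBoundary c s, 0 ≤ v x) :
    ∀ x ∈ s, 0 < v x := by
  intro z hz
  obtain ⟨x, hx, hmin⟩ := s.exists_min_image v ⟨z, hz⟩
  suffices hvx : 0 < v x from hvx.trans_le (hmin z hz)
  by_contra! hvx
  refine (hv x hx).not_ge (schrodingerOperator_apply_nonpos (hc x hx) (hW x hx) hvx fun y hy ↦ ?_)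
  rcases mem_or_mem_outerBoundary hx hy with hys | hys
  · exact hmin y hys
  · exact hvx.trans (hbd y hys)

theorem eigenvalue_mul_abs_nonneg {lam : K} {x : V} (hc : 0 ≤ c x) (hW : 0 ≤ W x)
    (hmax : ∀ y ∈ (c x).support, |ψ y| ≤ |ψ x|)
    (heig : schrodingerOperator c W ψ x = lam * ψ x) : 0 ≤ lam * |ψ x| := by
  rcases le_total 0 (ψ x) with hx | hx
  · have hnonpos : schrodingerOperator c W (-ψ) x ≤ 0 :=
      schrodingerOperator_apply_nonpos hc hW (neg_nonpos.mpr hx) fun y hy ↦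
        neg_le_neg ((le_abs_self _).trans ((hmax y hy).trans_eq (abs_of_nonneg hx)))
    rwa [map_neg, Pi.neg_apply, heig, neg_nonpos, ← abs_of_nonneg hx] at hnonpos
  · have hnonpos : schrodingerOperator c W ψ x ≤ 0 :=
      schrodingerOperator_apply_nonpos hc hW hx fun y hy ↦
        neg_le_neg_iff.mp ((neg_le_abs _).trans ((hmax y hy).trans_eq (abs_of_nonpos hx)))
    rwa [abs_of_nonpos hx, mul_neg, neg_nonneg, ← heig]

theorem eigenvalue_mul_sup'_abs_nonneg {lam : K} (hs : s.Nonempty) (hc : ∀ x ∈ s, 0 ≤ c x)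
    (hW : ∀ x ∈ s, 0 ≤ W x) (heig : ∀ x ∈ s, schrodingerOperator c W ψ x = lam * ψ x)
    (hbd : ∀ x ∈ outerBoundary c s, ψ x = 0) : 0 ≤ lam * s.sup' hs fun x ↦ |ψ x| := by
  obtain ⟨x, hx, hsup⟩ := s.exists_mem_eq_sup' hs fun x ↦ |ψ x|
  rw [hsup]
  refine eigenvalue_mul_abs_nonneg (hc x hx) (hW x hx) (fun y hy ↦ ?_) (heig x hx)
  rcases mem_or_mem_outerBoundary hx hy with hys | hys
  · exact (s.le_sup' (fun x ↦ |ψ x|) hys).trans_eq hsup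
  · simp only [hbd y hys, abs_zero, abs_nonneg]

theorem abs_schrodingerOperator_le_eigenvalue_mul_sup' {lam : K} (hs : s.Nonempty)
    (hc : ∀ x ∈ s, 0 ≤ c x) (hW : ∀ x ∈ s, 0 ≤ W x)
    (heig : ∀ x ∈ s, schrodingerOperator c W ψ x = lam * ψ x)
    (hbd : ∀ x ∈ outerBoundary c s, ψ x = 0) :
    ∀ x ∈ s, |schrodingerOperator c W ψ x| ≤ lam * s.sup' hs fun y ↦ |ψ y| := by
  intro x hx
  set M := s.sup' hs fun y ↦ |ψ y|
  have hxM : |ψ x| ≤ |M| := (s.le_sup' (fun y ↦ |ψ y|) hx).trans (le_abs_self M)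
  have hlamM : 0 ≤ lam * M := eigenvalue_mul_sup'_abs_nonneg hs hc hW heig hbd
  calc |schrodingerOperator c W ψ x| = |lam| * |ψ x| := by rw [heig x hx, abs_mul]
    _ ≤ |lam| * |M| := mul_le_mul_of_nonneg_left hxM (abs_nonneg lam)
    _ = lam * M := by rw [← abs_mul, abs_of_nonneg hlamM]

end OrderedRing

section OrderedField

variable {V K : Type*} [Field K] [LinearOrder K] [IsStrictOrderedRing K]
  {c : V → V →₀ K} {W u v w : V → K} {s : Finset V}

theorem nonneg_of_schrodingerOperator_nonneg (hc : ∀ x ∈ s, 0 ≤ c x) (hW : ∀ x ∈ s, 0 ≤ W x)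
    (hu : ∀ x ∈ s, 0 < schrodingerOperator c W u x) (hubd : ∀ x ∈ outerBoundary c s, 0 ≤ u x)
    (hv : ∀ x ∈ s, 0 ≤ schrodingerOperator c W v x) (hvbd : ∀ x ∈ outerBoundary c s, 0 ≤ v x) :
    ∀ x ∈ s, 0 ≤ v x := by
  intro x hx
  have hux : 0 < u x := pos_of_schrodingerOperator_pos hc hW hu hubd x hx
  refine le_of_forall_pos_le_add fun ε hε ↦ ?_
  have hδ : 0 < ε / u x := div_pos hε hux
  have hpos : 0 < (v + (ε / u x) • u) x := by
    refine pos_of_schrodingerOperator_pos hc hW (fun y hy ↦ ?_) (fun y hy ↦ ?_) x hx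
    · rw [map_add, map_smul]
      exact add_pos_of_nonneg_of_pos (hv y hy) (mul_pos hδ (hu y hy))
    · exact add_nonneg (hvbd y hy) (mul_nonneg hδ.le (hubd y hy))
  rw [Pi.add_apply, Pi.smul_apply, smul_eq_mul, div_mul_cancel₀ ε hux.ne'] at hpos
  exact hpos.le

theorem le_of_schrodingerOperator_le (hc : ∀ x ∈ s, 0 ≤ c x) (hW : ∀ x ∈ s, 0 ≤ W x)
    (hu : ∀ x ∈ s, 0 < schrodingerOperator c W u x) (hubd : ∀ x ∈ outerBoundary c s, 0 ≤ u x)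
    (hvw : ∀ x ∈ s, schrodingerOperator c W v x ≤ schrodingerOperator c W w x)
    (hbd : ∀ x ∈ outerBoundary c s, v x ≤ w x) : ∀ x ∈ s, v x ≤ w x := by
  intro x hx
  refine sub_nonneg.mp (nonneg_of_schrodingerOperator_nonneg (v := w - v) hc hW hu hubd
    (fun y hy ↦ ?_) (fun y hy ↦ sub_nonneg.mpr (hbd y hy)) x hx)
  rw [map_sub]
  exact sub_nonneg.mpr (hvw y hy)

theorem le_mul_of_schrodingerOperator_eq_one {a : K} (hc : ∀ x ∈ s, 0 ≤ c x)
    (hW : ∀ x ∈ s, 0 ≤ W x) (hu : ∀ x ∈ s, schrodingerOperator c W u x = 1)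
    (hubd : ∀ x ∈ outerBoundary c s, u x = 0) (hv : ∀ x ∈ s, schrodingerOperator c W v x ≤ a)
    (hvbd : ∀ x ∈ outerBoundary c s, v x ≤ 0) : ∀ x ∈ s, v x ≤ a * u x := by
  refine le_of_schrodingerOperator_le (w := a • u) hc hW (fun x hx ↦ (hu x hx).symm ▸ zero_lt_one)
    (fun x hx ↦ (hubd x hx).ge) (fun x hx ↦ ?_) (fun x hx ↦ ?_)
  · rw [map_smul, Pi.smul_apply, hu x hx, smul_eq_mul, mul_one]
    exact hv x hx
  · rw [Pi.smul_apply, hubd x hx, smul_zero]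
    exact hvbd x hx

theorem discrete_landscape_inequality_pointwise_general {ψ : V → K} {lam : K} (hs : s.Nonempty)
    (hc : ∀ x ∈ s, 0 ≤ c x) (hW : ∀ x ∈ s, 0 ≤ W x)
    (heig : ∀ x ∈ s, schrodingerOperator c W ψ x = lam * ψ x)
    (hψ : ∀ x ∈ outerBoundary c s, ψ x = 0)
    (hland : ∀ x ∈ s, schrodingerOperator c W u x = 1)
    (hu : ∀ x ∈ outerBoundary c s, u x = 0) :
    ∀ x ∈ s, |ψ x| ≤ lam * (s.sup' hs fun y ↦ |ψ y|) * u x := by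
  have hsource : ∀ x ∈ s, |schrodingerOperator c W ψ x| ≤ lam * s.sup' hs fun y ↦ |ψ y| :=
    abs_schrodingerOperator_le_eigenvalue_mul_sup' hs hc hW heig hψ
  have hupper := le_mul_of_schrodingerOperator_eq_one hc hW hland hu
    (fun x hx ↦ (le_abs_self _).trans (hsource x hx)) (fun x hx ↦ (hψ x hx).le)
  have hlower := le_mul_of_schrodingerOperator_eq_one (v := -ψ) hc hW hland hu
    (fun x hx ↦ by
      rw [map_neg]
      exact (neg_le_abs _).trans (hsource x hx))
    (fun x hx ↦ neg_nonpos.mpr (hψ x hx).ge)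
  exact fun x hx ↦ abs_le'.mpr ⟨hupper x hx, hlower x hx⟩

end OrderedField

section Path

variable {K : Type*} [CommRing K]

/-- Hopping of amplitude `t` between consecutive sites of the path `0, 1, 2, …`. Truncated
subtraction adds a hop from `0` to itself, which does not contribute to the operator. -/
noncomputable def pathHopping (t : K) (j : ℕ) : ℕ →₀ K :=
  Finsupp.single (j + 1) t + Finsupp.single (j - 1) t

theorem schrodingerOperator_pathHopping (t : K) (W v : ℕ → K) (j : ℕ) :
    schrodingerOperator (pathHopping t) W v j =
      -t * (v (j + 1) + v (j - 1) - 2 * v j) + W j * v j := by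
  rw [schrodingerOperator_apply, pathHopping,
    Finsupp.sum_add_index' (fun _ ↦ zero_mul _) (fun _ _ _ ↦ add_mul _ _ _),
    Finsupp.sum_single_index (zero_mul _), Finsupp.sum_single_index (zero_mul _)]
  ring

theorem outerBoundary_pathHopping_subset (t : K) (L : ℕ) :
    outerBoundary (pathHopping t) (Finset.Icc 1 L) ⊆ {0, L + 1} := by
  rintro y ⟨hy, x, hx, hxy⟩
  have hstep : y = x + 1 ∨ y = x - 1 := by
    by_contra! hne
    exact hxy (by simp [pathHopping, hne.1.symm, hne.2.symm])
  simp only [Finset.mem_Icc, Set.mem_insert_iff, Set.mem_singleton_iff] at hx hy ⊢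
  lia

theorem eq_zero_of_mem_outerBoundary_pathHopping {t : K} {L : ℕ} {v : ℕ → K} (hv0 : v 0 = 0)
    (hvL : v (L + 1) = 0) :
    ∀ j ∈ outerBoundary (pathHopping t) (Finset.Icc 1 L), v j = 0 := by
  intro j hj
  rcases outerBoundary_pathHopping_subset t L hj with rfl | rfl
  exacts [hv0, hvL]

theorem pathHopping_nonneg [PartialOrder K] [IsOrderedAddMonoid K] {t : K} (ht : 0 ≤ t) (j : ℕ) :
    0 ≤ pathHopping t j :=
  add_nonneg (Finsupp.single_nonneg.mpr ht) (Finsupp.single_nonneg.mpr ht)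

end Path

/-- Pointwise form of the first control inequality: if `(λ, ψ)` is a Dirichlet
eigenpair of `-tΔ_D + W` and `u` is the landscape function, then
`ψⱼ ≤ λ (max_k |ψ_k|) uⱼ` at every interior site. -/
theorem discrete_landscape_inequality_pointwise
    (L : ℕ) (hL : 1 ≤ L) (t : ℝ) (ht : 0 < t) (W ψ u : ℕ → ℝ) (lam : ℝ)
    (hW : ∀ i ∈ Finset.Icc 1 L, 0 ≤ W i)
    (hψ0 : ψ 0 = 0) (hψL : ψ (L + 1) = 0)
    (heig : ∀ j ∈ Finset.Icc 1 L,
      -t * (ψ (j + 1) + ψ (j - 1) - 2 * ψ j) + W j * ψ j = lam * ψ j)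
    (hu0 : u 0 = 0) (huL : u (L + 1) = 0)
    (hland : ∀ j ∈ Finset.Icc 1 L,
      -t * (u (j + 1) + u (j - 1) - 2 * u j) + W j * u j = 1) :
    ∀ j ∈ Finset.Icc 1 L,
      ψ j ≤ lam * ((Finset.Icc 1 L).sup' (Finset.nonempty_Icc.mpr hL)
          (fun k => |ψ k|)) * u j := by
  simp only [← schrodingerOperator_pathHopping] at heig hland
  exact fun j hj ↦ (le_abs_self (ψ j)).trans <| discrete_landscape_inequality_pointwise_general
    (Finset.nonempty_Icc.mpr hL) (fun i _ ↦ pathHopping_nonneg ht.le i) hW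
    heig (eq_zero_of_mem_outerBoundary_pathHopping hψ0 hψL)
    hland (eq_zero_of_mem_outerBoundary_pathHopping hu0 huL) j hj
end
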